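/- Let Q̂ be a symmetric d×d real matrix with zero diagonal, let Ψ be a finite set of ordered triples (i,j,k) of pairwise distinct indices in {1, …, d}, and let η = (η_{ijk})_{(i,j,k)∈Ψ} be nonnegative reals. Define the matrix Q(η) by Q(η)_{ab} = Q̂_{ab} + ∑_{(i,j,k)∈Ψ} η_{ijk}·(1 if {a,b} = {i,j}, −1 if {a,b} = {i,k}, −1 if {a,b} = {j,k}, 0 otherwise), symmetrically for a ≠ b with zero diagonal. Suppose Q(η) ∈ 𝒬. Then the Lagrangian L(Γ, η) = ⟨Γ, Q̂⟩ − log det(CM(Γ)) + ∑_{(i,j,k)∈Ψ} η_{ijk}(Γ_{ij} − Γ_{ik} − Γ_{jk}), viewed as a function of Γ on the cone 𝒞^d of strictly conditionally negative definite symmetric matrices with zero diagonal, attains its infimum uniquely at Γ = Γ(Q(η)), and the infimum value equals log τ(Q(η)) + (d − 1). -/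

import Mathlib

open Matrix Finset

/-- `Θ(Q)`: `Θ(Q)_{ij} = −Q_{ij}` for `i ≠ j` and `Θ(Q)_{ii} = ∑_{j≠i} Q_{ij}`. -/
noncomputable def thetaOf {d : ℕ} (Q : Matrix (Fin d) (Fin d) ℝ) :
    Matrix (Fin d) (Fin d) ℝ :=
  Matrix.of fun i j => if i = j then ∑ l ∈ univ.filter (fun l => l ≠ i), Q i l else -Q i j

/-- Membership in `𝒬`: symmetric, zero diagonal, and `xᵀΘ(Q)x > 0` for every nonzero
`x` with `∑ᵢ xᵢ = 0`. -/
def memQ {d : ℕ} (Q : Matrix (Fin d) (Fin d) ℝ) : Prop :=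
  Q.IsSymm ∧ (∀ i, Q i i = 0) ∧
    ∀ x : Fin d → ℝ, x ≠ 0 → (∑ i, x i) = 0 → 0 < x ⬝ᵥ (thetaOf Q).mulVec x

/-- The centering matrix `P = I − (1/d)𝟙𝟙ᵀ`. -/
noncomputable def Pmat (d : ℕ) : Matrix (Fin d) (Fin d) ℝ :=
  1 - ((d : ℝ)⁻¹) • Matrix.of (fun _ _ : Fin d => (1 : ℝ))

/-- `S` is the matrix `Σ(Q)`: the unique symmetric matrix with `Σ(Q)𝟙 = 0` and
`Θ(Q)Σ(Q) = P`. -/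
def isSigmaOf {d : ℕ} (Q S : Matrix (Fin d) (Fin d) ℝ) : Prop :=
  S.IsSymm ∧ S.mulVec (fun _ => 1) = 0 ∧ thetaOf Q * S = Pmat d

/-- The variogram associated with `Σ`: `Γ_{ij} = Σ_{ii} + Σ_{jj} − 2Σ_{ij}`. -/
noncomputable def gammaOf {d : ℕ} (S : Matrix (Fin d) (Fin d) ℝ) :
    Matrix (Fin d) (Fin d) ℝ :=
  Matrix.of fun i j => S i i + S j j - 2 * S i j

/-- The inner product `⟨A, B⟩ = ∑_{i<j} A_{ij} B_{ij}` on symmetric matrices with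
zero diagonal. -/
noncomputable def sinner {d : ℕ} (A B : Matrix (Fin d) (Fin d) ℝ) : ℝ :=
  ∑ p ∈ univ.filter (fun p : Fin d × Fin d => p.1 < p.2), A p.1 p.2 * B p.1 p.2

open Classical in
/-- The spanning tree polynomial `τ(Q) = ∑_T ∏_{{i,j}∈T} Q_{ij}`, summed over all
spanning trees of the complete graph on `{1, …, d}`. -/
noncomputable def tau {d : ℕ} (Q : Matrix (Fin d) (Fin d) ℝ) : ℝ :=
  ∑ T ∈ (univ : Finset (SimpleGraph (Fin d))).filter (fun T => T.IsTree),
    ∏ p ∈ univ.filter (fun p : Fin d × Fin d => p.1 < p.2 ∧ T.Adj p.1 p.2), Q p.1 p.2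

/-- The Cayley–Menger matrix of `Γ`. -/
noncomputable def CM {d : ℕ} (Γ : Matrix (Fin d) (Fin d) ℝ) :
    Matrix (Fin (d + 1)) (Fin (d + 1)) ℝ :=
  Matrix.of fun a b =>
    if ha : (a : ℕ) < d then
      (if hb : (b : ℕ) < d then -Γ ⟨a, ha⟩ ⟨b, hb⟩ / 2 else 1)
    else (if (b : ℕ) < d then -1 else 0)

/-- Membership in the cone `𝒞^d` of symmetric matrices with zero diagonal that are
strictly conditionally negative definite. -/
def memC {d : ℕ} (Γ : Matrix (Fin d) (Fin d) ℝ) : Prop :=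
  Γ.IsSymm ∧ (∀ i, Γ i i = 0) ∧
    ∀ x : Fin d → ℝ, x ≠ 0 → (∑ i, x i) = 0 → x ⬝ᵥ Γ.mulVec x < 0
/-- Coefficient of the triangle-inequality constraint `g_{ijk}` in the entry `(a,b)`:
`1` if `{a,b} = {i,j}`, `−1` if `{a,b} = {i,k}`, `−1` if `{a,b} = {j,k}`, `0` else. -/
noncomputable def triCoeff {d : ℕ} (i j k a b : Fin d) : ℝ :=
  if (a = i ∧ b = j) ∨ (a = j ∧ b = i) then 1
  else if (a = i ∧ b = k) ∨ (a = k ∧ b = i) then -1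
  else if (a = j ∧ b = k) ∨ (a = k ∧ b = j) then -1
  else 0

/-- The matrix `Q(η) = Q̂ + ∑_{(i,j,k)∈Ψ} η_{ijk} ∇_Γ g_{ijk}`. -/
noncomputable def Qeta {d : ℕ} (Qh : Matrix (Fin d) (Fin d) ℝ)
    (Ψ : Finset (Fin d × Fin d × Fin d)) (η : Fin d × Fin d × Fin d → ℝ) :
    Matrix (Fin d) (Fin d) ℝ :=
  Matrix.of fun a b => Qh a b + ∑ t ∈ Ψ, η t * triCoeff t.1 t.2.1 t.2.2 a b

/-- The Lagrangian of the step (S2) problem: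
`L(Γ, η) = ⟨Γ, Q̂⟩ − log det(CM(Γ)) + ∑_{(i,j,k)∈Ψ} η_{ijk}(Γ_{ij} − Γ_{ik} − Γ_{jk})`. -/
noncomputable def lagrangian {d : ℕ} (Qh : Matrix (Fin d) (Fin d) ℝ)
    (Ψ : Finset (Fin d × Fin d × Fin d)) (η : Fin d × Fin d × Fin d → ℝ)
    (Γ : Matrix (Fin d) (Fin d) ℝ) : ℝ :=
  sinner Γ Qh - Real.log ((CM Γ).det)
    + ∑ t ∈ Ψ, η t * (Γ t.1 t.2.1 - Γ t.1 t.2.2 - Γ t.2.1 t.2.2)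

/-
Fix a root `r`, let `A` be the Laplacian `Θ(Q(η))` with row and column `r` deleted, and let
`B i j = (Γ i r + Γ r j - Γ i j) / 2` for `i, j ≠ r`; `Γ` is in the cone iff `B` is positive
definite. Block elimination gives `det (CM Γ) = det B`, and `⟨Γ, Q(η)⟩ = tr (A B)`, so that the
Lagrangian is `tr (A B) - log det B`. Applying `t - log t ≥ 1` to the eigenvalues of a positive
definite matrix similar to `A B` bounds it below by `d - 1 + log det A`, with equality iff
`A B = 1`, which determines `Γ` and holds at the variogram of `Q(η)`. Finally
`det A = τ(Q(η))` by the matrix-tree theorem, proved by expanding `det A` over all maps assigning a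
parent to each vertex other than `r`: arborescences contribute their weight, other maps zero.
-/

section MatrixTree

variable {V : Type*} {r : V}

/-- The vertex is carried to the root `r` by iterating the parent map `f`. A parent map assigns a
vertex to every vertex other than `r`. -/
inductive ReachesRoot (f : {v // v ≠ r} → V) : V → Prop
  | root : ReachesRoot f r
  | step (v : {v // v ≠ r}) : ReachesRoot f (f v) → ReachesRoot f v

/-- A parent map is an arborescence if its arrows `v → f v` form a spanning tree oriented towards
the root `r`. -/
def IsArborescence (f : {v // v ≠ r} → V) : Prop := ∀ v, ReachesRoot f v

/-- The underlying undirected graph of a parent map. -/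
def parentGraph (f : {v // v ≠ r} → V) : SimpleGraph V :=
  .fromEdgeSet (Set.range fun v : {v // v ≠ r} => s(v.1, f v))

variable {f g : {v // v ≠ r} → V}

theorem reachesRoot_parent_iff (v : {v // v ≠ r}) : ReachesRoot f (f v) ↔ ReachesRoot f v := by
  refine ⟨.step v, fun h => ?_⟩
  generalize hw : (v : V) = w at h
  cases h with
  | root => exact absurd hw v.2
  | step w h => exact Subtype.ext hw ▸ h

theorem ReachesRoot.notMem_of_forall_parent_mem {C : Set V} (hr : r ∉ C)
    (hC : ∀ v : {v // v ≠ r}, ↑v ∈ C → f v ∈ C) {v : V} (h : ReachesRoot f v) : v ∉ C := by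
  induction h with
  | root => exact hr
  | step v _ ih => exact fun hv => ih (hC v hv)

namespace IsArborescence

theorem parent_ne (hf : IsArborescence f) (v : {v // v ≠ r}) : f v ≠ v := fun h =>
  (hf v).notMem_of_forall_parent_mem (C := {↑v}) v.2.symm
    (fun w hw => by rw [Subtype.ext hw, h]; rfl) rfl

theorem parent_parent_ne (hf : IsArborescence f) {v w : {v // v ≠ r}} (hv : f v = w) :
    f w ≠ v := fun hw =>
  (hf v).notMem_of_forall_parent_mem (C := {↑v, ↑w})
    (by simp [v.2.symm, w.2.symm])
    (by
      rintro u (hu | hu)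
      · exact .inr (by rw [Subtype.ext hu, hv]; rfl)
      · exact .inl (by rw [Subtype.ext hu, hw]))
    (.inl rfl)

theorem edgeSet_parentGraph (hf : IsArborescence f) :
    (parentGraph f).edgeSet = Set.range fun v : {v // v ≠ r} => s(v.1, f v) := by
  rw [parentGraph, SimpleGraph.edgeSet_fromEdgeSet, sdiff_eq_left, Set.disjoint_left]
  rintro _ ⟨v, rfl⟩ hdiag
  exact hf.parent_ne v (Sym2.mk_isDiag_iff.1 hdiag).symm

theorem parentGraph_adj (hf : IsArborescence f) (v : {v // v ≠ r}) :
    (parentGraph f).Adj v (f v) := by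
  rw [← SimpleGraph.mem_edgeSet, hf.edgeSet_parentGraph]
  exact ⟨v, rfl⟩

theorem edge_injective (hf : IsArborescence f) :
    Function.Injective fun v : {v // v ≠ r} => s(v.1, f v) := by
  intro v w h
  rcases Sym2.eq_iff.1 h with ⟨hvw, _⟩ | ⟨hv, hw⟩
  · exact Subtype.ext hvw
  · exact absurd hv.symm (hf.parent_parent_ne hw)

theorem eq_of_parentGraph_eq (hf : IsArborescence f) (hg : IsArborescence g)
    (h : parentGraph f = parentGraph g) : f = g := by
  suffices ∀ u, ReachesRoot f u → ∀ v : {v // v ≠ r}, ↑v = u → f v = g v from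
    funext fun v => this v (hf v) v rfl
  intro u hu
  induction hu with
  | root => exact fun v hv => absurd hv v.2
  | step u _ ih =>
    rintro v hvu
    obtain rfl := Subtype.ext hvu
    have hadj : s(v.1, f v) ∈ (parentGraph g).edgeSet := h ▸ hf.parentGraph_adj v
    rw [hg.edgeSet_parentGraph] at hadj
    obtain ⟨w, hw⟩ := hadj
    rcases Sym2.eq_iff.1 hw with ⟨hwv, hfg⟩ | ⟨hwf, hgw⟩
    · rw [← hfg, Subtype.ext hwv]
    · exact absurd ((ih w hwf).trans hgw) (hf.parent_parent_ne hwf.symm)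

theorem connected_parentGraph (hf : IsArborescence f) : (parentGraph f).Connected := by
  have reachable_root (v : V) : (parentGraph f).Reachable v r := by
    induction hf v with
    | root => rfl
    | step v _ ih => exact (hf.parentGraph_adj v).reachable.trans ih
  have : Nonempty V := ⟨r⟩
  exact .mk fun v w => (reachable_root v).trans (reachable_root w).symm

theorem isTree_parentGraph [Finite V] (hf : IsArborescence f) : (parentGraph f).IsTree := by
  classical
  refine SimpleGraph.isTree_iff_connected_and_card.2 ⟨hf.connected_parentGraph, ?_⟩
  rw [hf.edgeSet_parentGraph, Nat.card_range_of_injective hf.edge_injective,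
    ← Finite.card_option, Nat.card_congr (Equiv.optionSubtypeNe r)]

end IsArborescence

theorem exists_adj_dist_lt_of_connected {G : SimpleGraph V} (hG : G.Connected) {v : V}
    (hv : v ≠ r) : ∃ w, G.Adj v w ∧ G.dist w r < G.dist v r := by
  obtain ⟨p, hp⟩ := hG.exists_walk_length_eq_dist v r
  cases p with
  | nil => exact absurd rfl hv
  | cons h q =>
    refine ⟨_, h, ?_⟩
    rw [← hp, SimpleGraph.Walk.length_cons]
    exact Nat.lt_succ_of_le (SimpleGraph.dist_le q)

theorem exists_isArborescence_parentGraph_eq {T : SimpleGraph V} (hT : T.IsTree) (r : V) :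
    ∃ f : {v // v ≠ r} → V, IsArborescence f ∧ parentGraph f = T := by
  choose f hadj hdist using fun v : {v // v ≠ r} =>
    exists_adj_dist_lt_of_connected hT.connected v.2
  have hf : IsArborescence f := by
    intro v
    induction hk : T.dist v r using Nat.strong_induction_on generalizing v with
    | _ k ih =>
      obtain rfl | hv := eq_or_ne v r
      · exact .root
      · exact .step ⟨v, hv⟩ (ih _ (hk ▸ hdist ⟨v, hv⟩) _ rfl)
  refine ⟨f, hf, (SimpleGraph.isTree_iff_minimal_connected.1 hT).eq_of_le
    hf.connected_parentGraph ?_⟩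
  rw [← SimpleGraph.edgeSet_subset_edgeSet, hf.edgeSet_parentGraph]
  rintro _ ⟨v, rfl⟩
  exact hadj v

variable [DecidableEq V]

open Classical in
theorem sum_isArborescence_eq_sum_isTree [Fintype V] {R : Type*} [CommSemiring R]
    (w : Sym2 V → R) (r : V) :
    ∑ f : {v // v ≠ r} → V with IsArborescence f, ∏ v : {v // v ≠ r}, w s(v.1, f v) =
      ∑ T : SimpleGraph V with T.IsTree, ∏ e ∈ T.edgeFinset, w e := by
  refine Finset.sum_bij (fun f _ => parentGraph f) ?_ ?_ ?_ ?_
  · intro f hf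
    simpa using (Finset.mem_filter.1 hf).2.isTree_parentGraph
  · intro f hf g hg
    exact (Finset.mem_filter.1 hf).2.eq_of_parentGraph_eq (Finset.mem_filter.1 hg).2
  · intro T hT
    obtain ⟨f, hf, rfl⟩ := exists_isArborescence_parentGraph_eq (Finset.mem_filter.1 hT).2 r
    exact ⟨f, by simpa using hf, rfl⟩
  · intro f hf
    have hf : IsArborescence f := (Finset.mem_filter.1 hf).2
    have hedges : (parentGraph f).edgeFinset =
        univ.image fun v : {v // v ≠ r} => s(v.1, f v) := by
      ext e
      simp [hf.edgeSet_parentGraph]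
    rw [hedges, Finset.prod_image fun _ _ _ _ h => hf.edge_injective h]

/-- The row `e_v - e_w` of the arrow `v → w`, with the column of the root deleted. -/
def arrowRow (R : Type*) [Ring R] (v : {v // v ≠ r}) (w : V) : {v // v ≠ r} → R :=
  fun u => (if v = u then 1 else 0) - if w = u then 1 else 0

variable [Fintype V] {R : Type*} [CommRing R]

theorem arrowRow_dotProduct {y : V → R} (hy : y r = 0) (v : {v // v ≠ r}) (w : V) :
    arrowRow R v w ⬝ᵥ (fun u : {v // v ≠ r} => y u) = y v - y w := by
  have hw : ∑ u : {v // v ≠ r}, (if w = u then y u else 0) = y w := by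
    simpa [hy] using (Fintype.sum_eq_add_sum_subtype_ne (fun u => if w = u then y u else 0) r).symm
  simp [dotProduct, arrowRow, sub_mul, hw]

theorem IsArborescence.det_arrowRow (hf : IsArborescence f) :
    (Matrix.of fun v => arrowRow R v (f v)).det = 1 := by
  rw [← Matrix.det_transpose, Matrix.det_apply', Finset.sum_eq_single 1]
  · simp [arrowRow, hf.parent_ne]
  · intro σ _ hσ
    suffices ∃ v, σ v ≠ v ∧ f v ≠ σ v by
      obtain ⟨v, hv, hfv⟩ := this
      exact mul_eq_zero_of_right _ (Finset.prod_eq_zero (mem_univ v) <| by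
        simp [arrowRow, hv.symm, hfv])
    contrapose! hσ
    suffices ∀ u, ReachesRoot f u → ∀ v : {v // v ≠ r}, ↑v = u → σ v = v from
      Equiv.ext fun v => this v (hf v) v rfl
    intro u hu
    induction hu with
    | root => exact fun v hv => absurd hv v.2
    | step u _ ih =>
      rintro v hvu
      obtain rfl := Subtype.ext hvu
      by_contra hv
      exact hv (σ.injective (ih _ (hσ v hv).symm))
  · simp

theorem det_arrowRow_of_not_isArborescence (hf : ¬ IsArborescence f) :
    (Matrix.of fun v => arrowRow R v (f v)).det = 0 := by
  classical
  obtain ⟨v, hv⟩ := not_forall.1 hf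
  have hvr : v ≠ r := by
    rintro rfl
    exact hv .root
  let M : Matrix {v // v ≠ r} {v // v ≠ r} R := Matrix.of fun v => arrowRow R v (f v)
  -- The set of vertices not reaching the root is closed under parents and under children, so its
  -- indicator lies in the kernel.
  let y : V → R := fun v => if ReachesRoot f v then 0 else 1
  have hMy : M *ᵥ (fun u : {v // v ≠ r} => y u) = 0 := by
    funext u
    refine (arrowRow_dotProduct (y := y) (if_pos .root) u (f u)).trans ?_
    simp only [y, reachesRoot_parent_iff, sub_self, Pi.zero_apply]
  have hdet := congrFun (congrArg (M.adjugate *ᵥ ·) hMy) ⟨v, hvr⟩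
  simpa [Matrix.mulVec_mulVec, Matrix.adjugate_mul, Matrix.smul_mulVec, y, hv] using hdet

/-- The matrix with the row and the column of the root `r` deleted. -/
abbrev deleteRoot (r : V) (M : Matrix V V R) : Matrix {v // v ≠ r} {v // v ≠ r} R :=
  M.submatrix (↑) (↑)

/-- The Laplacian of the complete digraph with arc weights `Q`; diagonal weights cancel. -/
def weightedLaplacian (Q : Matrix V V R) : Matrix V V R :=
  diagonal (fun i => ∑ j, Q i j) - Q

theorem weightedLaplacian_mulVec_one (Q : Matrix V V R) :
    weightedLaplacian Q *ᵥ 1 = 0 := by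
  ext i
  simp [weightedLaplacian, mulVec, dotProduct, diagonal_apply]

theorem isSymm_weightedLaplacian {Q : Matrix V V R} (hQ : Q.IsSymm) :
    (weightedLaplacian Q).IsSymm :=
  (isSymm_diagonal _).sub hQ

theorem one_vecMul_weightedLaplacian {Q : Matrix V V R} (hQ : Q.IsSymm) :
    1 ᵥ* weightedLaplacian Q = 0 := by
  rw [← mulVec_transpose, isSymm_weightedLaplacian hQ, weightedLaplacian_mulVec_one]

open Classical in
theorem det_deleteRoot_weightedLaplacian (Q : Matrix V V R) (r : V) :
    (deleteRoot r (weightedLaplacian Q)).det =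
      ∑ f : {v // v ≠ r} → V with IsArborescence f, ∏ v : {v // v ≠ r}, Q v (f v) := by
  have hrows : deleteRoot r (weightedLaplacian Q) =
      fun v : {v // v ≠ r} => ∑ w, Q v w • arrowRow R v w := by
    ext v u
    simp [weightedLaplacian, arrowRow, diagonal_apply, mul_sub, Subtype.ext_iff]
  rw [hrows]
  calc Matrix.detRowAlternating (fun v : {v // v ≠ r} => ∑ w, Q v w • arrowRow R v w)
      = ∑ f : {v // v ≠ r} → V, (∏ v : {v // v ≠ r}, Q v (f v)) *
          (Matrix.of fun v => arrowRow R v (f v)).det :=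
        (MultilinearMap.map_sum _ _).trans
          (Finset.sum_congr rfl fun f _ => MultilinearMap.map_smul_univ _ _ _)
    _ = ∑ f : {v // v ≠ r} → V with IsArborescence f, ∏ v : {v // v ≠ r}, Q v (f v) := by
        rw [Finset.sum_filter]
        refine Finset.sum_congr rfl fun f _ => ?_
        split_ifs with hf
        · rw [hf.det_arrowRow, mul_one]
        · rw [det_arrowRow_of_not_isArborescence hf, mul_zero]

end MatrixTree

theorem prod_lt_adj_eq_prod_edgeFinset {V M : Type*} [Fintype V] [LinearOrder V] [CommMonoid M]
    (G : SimpleGraph V) [DecidableRel G.Adj] (w : Sym2 V → M) :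
    ∏ p : V × V with p.1 < p.2 ∧ G.Adj p.1 p.2, w s(p.1, p.2) = ∏ e ∈ G.edgeFinset, w e := by
  refine Finset.prod_bij (fun p _ => s(p.1, p.2)) ?_ ?_ ?_ fun _ _ => rfl
  · intro p hp
    exact SimpleGraph.mem_edgeFinset.2 (Finset.mem_filter.1 hp).2.2
  · intro p hp q hq h
    rcases Sym2.eq_iff.1 h with ⟨h₁, h₂⟩ | ⟨h₁, h₂⟩
    · exact Prod.ext h₁ h₂
    · have hp : p.1 < p.2 := (Finset.mem_filter.1 hp).2.1
      have hq : q.1 < q.2 := (Finset.mem_filter.1 hq).2.1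
      exact absurd (h₁ ▸ h₂ ▸ hp) hq.asymm
  · intro e he
    induction e using Sym2.ind with
    | _ a b =>
      have hadj : G.Adj a b := SimpleGraph.mem_edgeFinset.1 he
      rcases hadj.ne.lt_or_gt with hab | hba
      · exact ⟨(a, b), by simp [hab, hadj], rfl⟩
      · exact ⟨(b, a), by simp [hba, hadj.symm], Sym2.eq_swap⟩

theorem thetaOf_eq_weightedLaplacian {d : ℕ} (Q : Matrix (Fin d) (Fin d) ℝ) :
    thetaOf Q = weightedLaplacian Q := by
  ext i j
  obtain rfl | hij := eq_or_ne i j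
  · simp [thetaOf, weightedLaplacian, Finset.filter_ne', Finset.sum_erase_eq_sub]
  · simp [thetaOf, weightedLaplacian, hij]

theorem det_deleteRoot_thetaOf {d : ℕ} {Q : Matrix (Fin d) (Fin d) ℝ} (hQ : Q.IsSymm)
    (r : Fin d) : (deleteRoot r (thetaOf Q)).det = tau Q := by
  classical
  let w : Sym2 (Fin d) → ℝ := Sym2.lift ⟨Q, fun i j => hQ.apply j i⟩
  rw [thetaOf_eq_weightedLaplacian, det_deleteRoot_weightedLaplacian]
  refine (sum_isArborescence_eq_sum_isTree w r).trans (Finset.sum_congr rfl fun T _ => ?_)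
  exact (prod_lt_adj_eq_prod_edgeFinset T w).symm

section LogDet

variable {n : Type*} [Fintype n] [DecidableEq n]

theorem eq_one_of_eigenvalues_eq_one {𝕜 : Type*} [RCLike 𝕜] {A : Matrix n n 𝕜}
    (hA : A.IsHermitian) (h : ∀ i, hA.eigenvalues i = 1) : A = 1 := by
  have diagonal_eq_one : (diagonal (RCLike.ofReal ∘ hA.eigenvalues) : Matrix n n 𝕜) = 1 := by
    simp [funext h, Function.comp_def]
  rw [hA.spectral_theorem, diagonal_eq_one, map_one]

variable {A B : Matrix n n ℝ}

theorem trace_sub_log_det_sub_card_eq_sum (hA : A.PosDef) :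
    A.trace - Real.log A.det - Fintype.card n =
      ∑ i, (hA.isHermitian.eigenvalues i - 1 - Real.log (hA.isHermitian.eigenvalues i)) := by
  have log_det : Real.log A.det = ∑ i, Real.log (hA.isHermitian.eigenvalues i) := by
    rw [hA.isHermitian.det_eq_prod_eigenvalues]
    exact Real.log_prod fun i _ => (hA.eigenvalues_pos i).ne'
  have trace_eq : A.trace = ∑ i, hA.isHermitian.eigenvalues i :=
    hA.isHermitian.trace_eq_sum_eigenvalues
  simp only [log_det, trace_eq, Finset.sum_sub_distrib, Finset.sum_const, Finset.card_univ,
    nsmul_eq_mul, mul_one]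
  ring

theorem card_le_trace_sub_log_det (hA : A.PosDef) :
    (Fintype.card n : ℝ) ≤ A.trace - Real.log A.det := by
  rw [← sub_nonneg, trace_sub_log_det_sub_card_eq_sum hA]
  exact Finset.sum_nonneg fun i _ =>
    sub_nonneg.2 (Real.log_le_sub_one_of_pos (hA.eigenvalues_pos i))

theorem trace_sub_log_det_eq_card_iff (hA : A.PosDef) :
    A.trace - Real.log A.det = Fintype.card n ↔ A = 1 := by
  refine ⟨fun h => eq_one_of_eigenvalues_eq_one hA.isHermitian fun i => ?_, ?_⟩
  · rw [← sub_eq_zero, trace_sub_log_det_sub_card_eq_sum hA, Finset.sum_eq_zero_iff_of_nonneg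
      fun j _ => sub_nonneg.2 (Real.log_le_sub_one_of_pos (hA.eigenvalues_pos j))] at h
    by_contra hi
    exact (Real.log_lt_sub_one_of_pos (hA.eigenvalues_pos i) hi).ne'
      (sub_eq_zero.1 (h i (mem_univ i)))
  · rintro rfl
    simp

open scoped MatrixOrder in
theorem exists_posDef_trace_eq_det_eq (hA : A.PosDef) (hB : B.PosDef) :
    ∃ C : Matrix n n ℝ, C.PosDef ∧ C.trace = (A * B).trace ∧ C.det = A.det * B.det ∧
      (C = 1 ↔ A * B = 1) := by
  obtain ⟨M, hM, rfl⟩ :=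
    CStarAlgebra.isStrictlyPositive_iff_eq_star_mul_self.1 hA.isStrictlyPositive
  refine ⟨M * B * star M, (Matrix.IsUnit.posDef_star_right_conjugate_iff hM).2 hB, ?_, ?_, ?_⟩
  · rw [Matrix.trace_mul_comm, mul_assoc]
  · simp only [Matrix.det_mul]
    ring
  · rw [mul_eq_one_comm, mul_assoc]

theorem card_add_log_det_le_trace_mul_sub_log_det (hA : A.PosDef) (hB : B.PosDef) :
    Fintype.card n + Real.log A.det ≤ (A * B).trace - Real.log B.det := by
  obtain ⟨C, hC, htrace, hdet, -⟩ := exists_posDef_trace_eq_det_eq hA hB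
  have := card_le_trace_sub_log_det hC
  rw [htrace, hdet, Real.log_mul hA.det_pos.ne' hB.det_pos.ne'] at this
  linarith

theorem trace_mul_sub_log_det_eq_iff (hA : A.PosDef) (hB : B.PosDef) :
    (A * B).trace - Real.log B.det = Fintype.card n + Real.log A.det ↔ A * B = 1 := by
  obtain ⟨C, hC, htrace, hdet, hone⟩ := exists_posDef_trace_eq_det_eq hA hB
  rw [← hone, ← trace_sub_log_det_eq_card_iff hC, htrace, hdet,
    Real.log_mul hA.det_pos.ne' hB.det_pos.ne']
  constructor <;> intro h <;> linarith

end LogDet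

section RootDiff

variable {V R : Type*} [DecidableEq V] [CommRing R]

/-- The matrix with columns `e_i - e_r`, `i ≠ r`. They form a basis of the space of vectors with
coordinate sum `0`, in which the coordinates of `x` are the `x i`, `i ≠ r`. -/
def rootDiff (R : Type*) [Ring R] (r : V) : Matrix V {v // v ≠ r} R :=
  .of fun v i => (1 : Matrix V V R) v i - (1 : Matrix V V R) v r

variable [Fintype V] {r : V}

theorem mul_rootDiff_apply {m : Type*} (M : Matrix m V R) (i : m) (j : {v // v ≠ r}) :
    (M * rootDiff R r) i j = M i j - M i r := by
  simp [Matrix.mul_apply, rootDiff, mul_sub, one_apply]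

theorem rootDiff_transpose_mul_mul_apply (M : Matrix V V R) (i j : {v // v ≠ r}) :
    ((rootDiff R r)ᵀ * M * rootDiff R r) i j = M i j - M r j - (M i r - M r r) := by
  rw [mul_rootDiff_apply]
  simp [Matrix.mul_apply, rootDiff, sub_mul, one_apply]

theorem sum_rootDiff_mulVec (y : {v // v ≠ r} → R) : ∑ v, (rootDiff R r *ᵥ y) v = 0 := by
  rw [← one_dotProduct, dotProduct_mulVec]
  have one_vecMul : (1 : V → R) ᵥ* rootDiff R r = 0 := by
    ext i
    simp [rootDiff, vecMul, dotProduct, one_apply]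
  rw [one_vecMul, zero_dotProduct]

theorem rootDiff_mulVec_apply_of_ne (y : {v // v ≠ r} → R) (i : {v // v ≠ r}) :
    (rootDiff R r *ᵥ y) i = y i := by
  simp [mulVec, dotProduct, rootDiff, one_apply, i.2, ← Subtype.ext_iff]

theorem rootDiff_mulVec_restrict {x : V → R} (hx : ∑ v, x v = 0) :
    rootDiff R r *ᵥ (fun i => x i) = x := by
  have apply_ne (i : {v // v ≠ r}) : (rootDiff R r *ᵥ fun i => x i) i = x i :=
    rootDiff_mulVec_apply_of_ne _ i
  ext v
  obtain rfl | hv := eq_or_ne v r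
  · have hsum := (sum_rootDiff_mulVec fun i : {w // w ≠ v} => x i).trans hx.symm
    simpa [Fintype.sum_eq_add_sum_subtype_ne _ v, apply_ne] using hsum
  · exact apply_ne ⟨v, hv⟩

theorem rootDiff_mulVec_injective : Function.Injective (rootDiff R r).mulVec := fun y z h =>
  funext fun i => by
    rw [← rootDiff_mulVec_apply_of_ne y, ← rootDiff_mulVec_apply_of_ne z, h]

theorem rootDiff_mul_submatrix {m : Type*} {M : Matrix V m R} (hM : 1 ᵥ* M = 0) :
    rootDiff R r * M.submatrix (Subtype.val : {v // v ≠ r} → V) id = M := by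
  ext v j
  refine congrFun (rootDiff_mulVec_restrict (r := r) (x := fun i => M i j) ?_) v
  simpa [vecMul, dotProduct] using congrFun hM j

theorem submatrix_mul_rootDiff_transpose {m : Type*} {M : Matrix m V R} (hM : M *ᵥ 1 = 0) :
    M.submatrix id (Subtype.val : {v // v ≠ r} → V) * (rootDiff R r)ᵀ = M := by
  rw [← transpose_inj, transpose_mul, transpose_transpose, transpose_submatrix,
    rootDiff_mul_submatrix (by rw [vecMul_transpose, hM])]

theorem deleteRoot_mul_rootDiff_transpose {M : Matrix V V R} (hM : M *ᵥ 1 = 0) :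
    deleteRoot r M * (rootDiff R r)ᵀ = M.submatrix (Subtype.val : {v // v ≠ r} → V) id :=
  submatrix_mul_rootDiff_transpose (M := M.submatrix (Subtype.val : {v // v ≠ r} → V) id)
    (funext fun i => congrFun hM i)

theorem rootDiff_mul_deleteRoot_mul_transpose {M : Matrix V V R} (hrow : M *ᵥ 1 = 0)
    (hcol : 1 ᵥ* M = 0) : rootDiff R r * deleteRoot r M * (rootDiff R r)ᵀ = M := by
  rw [Matrix.mul_assoc, deleteRoot_mul_rootDiff_transpose hrow, rootDiff_mul_submatrix hcol]

theorem posDef_rootDiff_conj_iff {M : Matrix V V ℝ} (hM : M.IsSymm) :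
    ((rootDiff ℝ r)ᵀ * M * rootDiff ℝ r).PosDef ↔
      ∀ x : V → ℝ, x ≠ 0 → ∑ v, x v = 0 → 0 < x ⬝ᵥ M *ᵥ x := by
  have quadratic (y : {v // v ≠ r} → ℝ) :
      y ⬝ᵥ ((rootDiff ℝ r)ᵀ * M * rootDiff ℝ r) *ᵥ y =
        (rootDiff ℝ r *ᵥ y) ⬝ᵥ M *ᵥ (rootDiff ℝ r *ᵥ y) := by
    rw [← mulVec_mulVec, ← mulVec_mulVec, dotProduct_mulVec, vecMul_transpose]
  constructor
  · intro h x hx hsum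
    rw [← rootDiff_mulVec_restrict (r := r) hsum, ← quadratic]
    refine h.dotProduct_mulVec_pos fun h0 => hx ?_
    rw [← rootDiff_mulVec_restrict (r := r) hsum, h0, mulVec_zero]
  · intro h
    refine .of_dotProduct_mulVec_pos (Matrix.isHermitian_conjTranspose_mul_mul _ hM) fun y hy => ?_
    rw [star_trivial, quadratic]
    exact h _ (fun h0 => hy (rootDiff_mulVec_injective (h0.trans (mulVec_zero _).symm)))
      (sum_rootDiff_mulVec y)

theorem posDef_deleteRoot_of_posDef_rootDiff_conj {M : Matrix V V ℝ} (hrow : M *ᵥ 1 = 0)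
    (hcol : 1 ᵥ* M = 0) (hM : ((rootDiff ℝ r)ᵀ * M * rootDiff ℝ r).PosDef) :
    (deleteRoot r M).PosDef := by
  have hG : ((rootDiff ℝ r)ᵀ * rootDiff ℝ r).PosDef :=
    .conjTranspose_mul_self _ rootDiff_mulVec_injective
  rw [← Matrix.IsUnit.posDef_star_left_conjugate_iff hG.isUnit]
  convert hM using 1
  conv_rhs => rw [← rootDiff_mul_deleteRoot_mul_transpose (r := r) hrow hcol]
  rw [hG.isHermitian.star_eq]
  simp only [Matrix.mul_assoc]

end RootDiff

section RootedGram

variable {V : Type*} [Fintype V] [DecidableEq V] {r : V} {Γ Γ' : Matrix V V ℝ}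

/-- The Gram matrix of the vectors pointing from the root `r` to the other points, when `Γ` is the
matrix of squared distances of a point configuration. -/
noncomputable def rootedGram (r : V) (Γ : Matrix V V ℝ) : Matrix {v // v ≠ r} {v // v ≠ r} ℝ :=
  (rootDiff ℝ r)ᵀ * ((-1 / 2 : ℝ) • Γ) * rootDiff ℝ r

theorem rootedGram_apply (i j : {v // v ≠ r}) :
    rootedGram r Γ i j = (Γ i r + Γ r j - Γ i j - Γ r r) / 2 := by
  rw [rootedGram, rootDiff_transpose_mul_mul_apply]
  simp only [Matrix.smul_apply, smul_eq_mul]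
  ring

theorem eq_of_rootedGram_eq (hsymm : Γ.IsSymm) (hdiag : ∀ v, Γ v v = 0) (hsymm' : Γ'.IsSymm)
    (hdiag' : ∀ v, Γ' v v = 0) (h : rootedGram r Γ = rootedGram r Γ') : Γ = Γ' := by
  have entry (i j : {v // v ≠ r}) : Γ i r + Γ r j - Γ i j = Γ' i r + Γ' r j - Γ' i j := by
    simpa [rootedGram_apply, hdiag, hdiag', div_left_inj'] using congrFun₂ h i j
  have to_root (i : V) : Γ i r = Γ' i r := by
    obtain rfl | hi := eq_or_ne i r
    · rw [hdiag, hdiag']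
    · have := entry ⟨i, hi⟩ ⟨i, hi⟩
      rw [hsymm.apply, hsymm'.apply, hdiag, hdiag'] at this
      rw [← hsymm.apply, ← hsymm'.apply]
      linarith
  have from_root (j : V) : Γ r j = Γ' r j := by rw [← hsymm.apply, ← hsymm'.apply, to_root]
  ext i j
  obtain rfl | hi := eq_or_ne i r
  · exact from_root j
  obtain rfl | hj := eq_or_ne j r
  · exact to_root i
  · have := entry ⟨i, hi⟩ ⟨j, hj⟩
    rw [to_root, from_root] at this
    linarith

theorem trace_deleteRoot_mul_rootedGram {M : Matrix V V ℝ} (hrow : M *ᵥ 1 = 0)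
    (hcol : 1 ᵥ* M = 0) :
    (deleteRoot r M * rootedGram r Γ).trace = -(M * Γ).trace / 2 := by
  calc (deleteRoot r M * rootedGram r Γ).trace
      = (rootDiff ℝ r * deleteRoot r M * (rootDiff ℝ r)ᵀ * ((-1 / 2 : ℝ) • Γ)).trace := by
        rw [rootedGram, ← Matrix.mul_assoc, Matrix.trace_mul_comm]
        simp only [Matrix.mul_assoc]
    _ = -(M * Γ).trace / 2 := by
        rw [rootDiff_mul_deleteRoot_mul_transpose hrow hcol, Matrix.mul_smul, trace_smul,
          smul_eq_mul]
        ring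

end RootedGram

section Variogram

variable {d : ℕ} {Q S Γ : Matrix (Fin d) (Fin d) ℝ}

theorem memQ.posDef_deleteRoot_thetaOf (hQ : memQ Q) (r : Fin d) :
    (deleteRoot r (thetaOf Q)).PosDef := by
  obtain ⟨hsymm, -, hpos⟩ := hQ
  rw [thetaOf_eq_weightedLaplacian] at hpos ⊢
  exact posDef_deleteRoot_of_posDef_rootDiff_conj (weightedLaplacian_mulVec_one Q)
    (one_vecMul_weightedLaplacian hsymm)
    ((posDef_rootDiff_conj_iff (isSymm_weightedLaplacian hsymm)).2 hpos)

theorem memC_iff_posDef_rootedGram (r : Fin d) :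
    memC Γ ↔ Γ.IsSymm ∧ (∀ i, Γ i i = 0) ∧ (rootedGram r Γ).PosDef := by
  refine and_congr_right fun hsymm => and_congr_right fun _ => ?_
  rw [rootedGram, posDef_rootDiff_conj_iff (hsymm.smul _)]
  refine forall₃_congr fun x _ _ => ?_
  rw [smul_mulVec, dotProduct_smul, smul_eq_mul]
  constructor <;> intro h <;> linarith

theorem rootedGram_gammaOf (r : Fin d) :
    rootedGram r (gammaOf S) = (rootDiff ℝ r)ᵀ * S * rootDiff ℝ r := by
  ext i j
  rw [rootedGram_apply, rootDiff_transpose_mul_mul_apply]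
  simp only [gammaOf, of_apply]
  ring

theorem deleteRoot_thetaOf_mul_rootedGram_gammaOf (hS : thetaOf Q * S = Pmat d) (r : Fin d) :
    deleteRoot r (thetaOf Q) * rootedGram r (gammaOf S) = 1 := by
  have hrow : thetaOf Q *ᵥ 1 = 0 := by
    rw [thetaOf_eq_weightedLaplacian, weightedLaplacian_mulVec_one]
  have hprod : (thetaOf Q).submatrix (Subtype.val : {i // i ≠ r} → Fin d) id * S =
      (Pmat d).submatrix Subtype.val id := by
    rw [← hS]
    rfl
  rw [rootedGram_gammaOf, Matrix.mul_assoc, ← Matrix.mul_assoc,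
    deleteRoot_mul_rootDiff_transpose hrow, ← Matrix.mul_assoc, hprod]
  ext i j
  rw [mul_rootDiff_apply]
  simp [Pmat, one_apply, i.2, Subtype.ext_iff]

theorem memC_gammaOf (hQ : memQ Q) (hS : S.IsSymm) (hΘS : thetaOf Q * S = Pmat d) (hd : 0 < d) :
    memC (gammaOf S) := by
  let r : Fin d := ⟨0, hd⟩
  rw [memC_iff_posDef_rootedGram r]
  refine ⟨?_, fun i => ?_, ?_⟩
  · ext i j
    simp only [gammaOf, transpose_apply, of_apply, hS.apply]
    ring
  · simp only [gammaOf, of_apply]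
    ring
  · rw [← inv_eq_right_inv (deleteRoot_thetaOf_mul_rootedGram_gammaOf hΘS r)]
    exact (hQ.posDef_deleteRoot_thetaOf r).inv

theorem trace_mul_eq_two_mul_sinner {A B : Matrix (Fin d) (Fin d) ℝ} (hA : A.IsSymm)
    (hB : B.IsSymm) (hB₀ : ∀ i, B i i = 0) : (A * B).trace = 2 * sinner A B := by
  have sum_gt : ∑ p : Fin d × Fin d with p.2 < p.1, A p.1 p.2 * B p.1 p.2 = sinner A B :=
    Finset.sum_equiv (Equiv.prodComm _ _) (by simp) fun p _ => by
      rw [Equiv.prodComm_apply, Prod.fst_swap, Prod.snd_swap, hA.apply, hB.apply]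
  have split (p : Fin d × Fin d) : A p.1 p.2 * B p.1 p.2 =
      (if p.1 < p.2 then A p.1 p.2 * B p.1 p.2 else 0) +
        if p.2 < p.1 then A p.1 p.2 * B p.1 p.2 else 0 := by
    rcases lt_trichotomy p.1 p.2 with h | h | h
    · simp [h, h.not_gt]
    · simp [h, hB₀]
    · simp [h, h.not_gt]
  calc (A * B).trace = ∑ p : Fin d × Fin d, A p.1 p.2 * B p.1 p.2 := by
        nth_rewrite 1 [← hB.eq]
        simp only [trace, diag_apply, Matrix.mul_apply, transpose_apply, Fintype.sum_prod_type]
    _ = sinner A B + sinner A B := by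
        rw [Finset.sum_congr rfl fun p _ => split p, Finset.sum_add_distrib, ← Finset.sum_filter,
          ← Finset.sum_filter, sum_gt, sinner]
    _ = 2 * sinner A B := (two_mul _).symm

theorem trace_deleteRoot_thetaOf_mul_rootedGram (hQ : Q.IsSymm) (hΓ : Γ.IsSymm)
    (hΓ₀ : ∀ i, Γ i i = 0) (r : Fin d) :
    (deleteRoot r (thetaOf Q) * rootedGram r Γ).trace = sinner Γ Q := by
  have sinner_thetaOf : sinner (thetaOf Q) Γ = -sinner Γ Q := by
    rw [sinner, sinner, ← Finset.sum_neg_distrib]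
    refine Finset.sum_congr rfl fun p hp => ?_
    have hp : p.1 ≠ p.2 := (Finset.mem_filter.1 hp).2.ne
    simp [thetaOf, hp, mul_comm]
  have hΘ : thetaOf Q = weightedLaplacian Q := thetaOf_eq_weightedLaplacian Q
  rw [trace_deleteRoot_mul_rootedGram (hΘ ▸ weightedLaplacian_mulVec_one Q)
      (hΘ ▸ one_vecMul_weightedLaplacian hQ),
    trace_mul_eq_two_mul_sinner (hΘ ▸ isSymm_weightedLaplacian hQ) hΓ hΓ₀, sinner_thetaOf]
  ring

end Variogram

section CayleyMenger

variable {d : ℕ} {Γ : Matrix (Fin d) (Fin d) ℝ}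

theorem card_fin_ne_add_one (r : Fin d) : Fintype.card {i // i ≠ r} + 1 = d := by
  rw [← Fintype.card_option, Fintype.card_congr (Equiv.optionSubtypeNe r), Fintype.card_fin]

/-- The indices of a Cayley–Menger matrix, with those of the root and of the border split off. -/
noncomputable def cayleyMengerIndex (r : Fin d) : {i // i ≠ r} ⊕ Fin 2 ≃ Fin (d + 1) :=
  .ofBijective (Sum.elim (fun i => i.1.castSucc) ![r.castSucc, Fin.last d]) <| by
    refine (Fintype.bijective_iff_surjective_and_card _).2 ⟨fun a => ?_, ?_⟩
    · cases a using Fin.lastCases with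
      | last => exact ⟨.inr 1, rfl⟩
      | cast i =>
        obtain rfl | hi := eq_or_ne i r
        · exact ⟨.inr 0, rfl⟩
        · exact ⟨.inl ⟨i, hi⟩, rfl⟩
    · have := card_fin_ne_add_one r
      simp only [Fintype.card_sum, Fintype.card_fin]
      lia

theorem CM_submatrix_cayleyMengerIndex {r : Fin d} (hr : Γ r r = 0) :
    (CM Γ).submatrix (cayleyMengerIndex r) (cayleyMengerIndex r) =
      fromBlocks (deleteRoot r ((-1 / 2 : ℝ) • Γ)) (.of fun i => ![-Γ i r / 2, 1])
        (.of ![fun j => -Γ r j / 2, fun _ => -1]) !![0, 1; -1, 0] := by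
  have index_inl (i : {i // i ≠ r}) : cayleyMengerIndex r (.inl i) = i.1.castSucc := rfl
  have index_root : cayleyMengerIndex r (.inr 0) = r.castSucc := rfl
  have index_border : cayleyMengerIndex r (.inr 1) = Fin.last d := rfl
  ext (i | i) (j | j)
  · simp only [CM, submatrix_apply, index_inl, of_apply, Fin.val_castSucc, Fin.is_lt, ↓reduceDIte,
      Fin.eta, fromBlocks_apply₁₁, Matrix.smul_apply, smul_eq_mul]
    ring
  · fin_cases j <;> simp [CM, index_inl, index_root, index_border]
  · fin_cases i <;> simp [CM, index_inl, index_root, index_border]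
  · fin_cases i <;> fin_cases j <;> simp [CM, index_root, index_border, hr]

theorem det_CM {r : Fin d} (hr : Γ r r = 0) : (CM Γ).det = (rootedGram r Γ).det := by
  let _ : Invertible !![(0 : ℝ), 1; -1, 0] :=
    ⟨!![0, -1; 1, 0], by simp [one_fin_two], by simp [one_fin_two]⟩
  rw [← det_submatrix_equiv_self (cayleyMengerIndex r), CM_submatrix_cayleyMengerIndex hr,
    det_fromBlocks₂₂, det_fin_two_of, mul_zero, mul_neg, zero_sub, neg_neg, one_mul, one_mul]
  congr 1
  ext i j
  have hinv : ⅟ !![(0 : ℝ), 1; -1, 0] = !![0, -1; 1, 0] := rfl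
  rw [rootedGram_apply, hr, hinv]
  simp only [Matrix.sub_apply, submatrix_apply, Matrix.smul_apply, smul_eq_mul, Matrix.mul_apply,
    of_apply, cons_val', cons_val_fin_one, Fin.sum_univ_two, cons_val_zero, cons_val_one]
  ring

end CayleyMenger

section Lagrangian

variable {d : ℕ} {Γ : Matrix (Fin d) (Fin d) ℝ}

theorem of_triCoeff_eq {i j k : Fin d} (hij : i ≠ j) (hik : i ≠ k) (hjk : j ≠ k) :
    Matrix.of (triCoeff i j k) = (single i j 1 + single j i 1) - (single i k 1 + single k i 1) -
      (single j k 1 + single k j 1) := by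
  ext a b
  simp only [triCoeff, of_apply, Matrix.sub_apply, Matrix.add_apply, single_apply]
  grind

theorem sinner_triCoeff (hΓ : Γ.IsSymm) {i j k : Fin d} (hij : i ≠ j) (hik : i ≠ k) (hjk : j ≠ k) :
    sinner Γ (.of (triCoeff i j k)) = Γ i j - Γ i k - Γ j k := by
  have hsymm : (Matrix.of (triCoeff i j k)).IsSymm := by
    ext a b
    simp only [transpose_apply, of_apply, triCoeff]
    grind
  have hdiag (a : Fin d) : Matrix.of (triCoeff i j k) a a = 0 := by
    simp only [of_apply, triCoeff]
    grind
  have htrace := trace_mul_eq_two_mul_sinner hΓ hsymm hdiag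
  rw [of_triCoeff_eq hij hik hjk] at htrace ⊢
  simp only [Matrix.mul_add, Matrix.mul_sub, trace_add, trace_sub, trace_mul_single,
    MulOpposite.op_one, one_smul, hΓ.apply i j, hΓ.apply i k, hΓ.apply j k] at htrace
  linarith

theorem sinner_Qeta (Qh : Matrix (Fin d) (Fin d) ℝ) (Ψ : Finset (Fin d × Fin d × Fin d))
    (η : Fin d × Fin d × Fin d → ℝ) :
    sinner Γ (Qeta Qh Ψ η) =
      sinner Γ Qh + ∑ t ∈ Ψ, η t * sinner Γ (.of (triCoeff t.1 t.2.1 t.2.2)) := by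
  simp only [sinner, Qeta, of_apply, mul_add, Finset.sum_add_distrib, Finset.mul_sum]
  rw [Finset.sum_comm]
  simp only [mul_left_comm]

variable {Qh : Matrix (Fin d) (Fin d) ℝ} {Ψ : Finset (Fin d × Fin d × Fin d)}
  {η : Fin d × Fin d × Fin d → ℝ}

theorem lagrangian_eq_sinner_Qeta_sub_log_det
    (hΨ : ∀ t ∈ Ψ, t.1 ≠ t.2.1 ∧ t.1 ≠ t.2.2 ∧ t.2.1 ≠ t.2.2) (hΓ : Γ.IsSymm) :
    lagrangian Qh Ψ η Γ = sinner Γ (Qeta Qh Ψ η) - Real.log (CM Γ).det := by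
  have constraints : ∑ t ∈ Ψ, η t * sinner Γ (.of (triCoeff t.1 t.2.1 t.2.2)) =
      ∑ t ∈ Ψ, η t * (Γ t.1 t.2.1 - Γ t.1 t.2.2 - Γ t.2.1 t.2.2) :=
    Finset.sum_congr rfl fun t ht => by
      obtain ⟨hij, hik, hjk⟩ := hΨ t ht
      rw [sinner_triCoeff hΓ hij hik hjk]
  rw [lagrangian, sinner_Qeta, constraints]
  ring

theorem lagrangian_eq_trace_sub_log_det
    (hΨ : ∀ t ∈ Ψ, t.1 ≠ t.2.1 ∧ t.1 ≠ t.2.2 ∧ t.2.1 ≠ t.2.2) (hQη : (Qeta Qh Ψ η).IsSymm)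
    (hΓ : Γ.IsSymm) (hΓ₀ : ∀ i, Γ i i = 0) (r : Fin d) :
    lagrangian Qh Ψ η Γ = (deleteRoot r (thetaOf (Qeta Qh Ψ η)) * rootedGram r Γ).trace -
      Real.log (rootedGram r Γ).det := by
  rw [lagrangian_eq_sinner_Qeta_sub_log_det hΨ hΓ,
    trace_deleteRoot_thetaOf_mul_rootedGram hQη hΓ hΓ₀, det_CM (hΓ₀ r)]

end Lagrangian

theorem lagrangian_inf_general {d : ℕ} (hd : 0 < d) (Qh : Matrix (Fin d) (Fin d) ℝ)
    (Ψ : Finset (Fin d × Fin d × Fin d))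
    (hΨ : ∀ t ∈ Ψ, t.1 ≠ t.2.1 ∧ t.1 ≠ t.2.2 ∧ t.2.1 ≠ t.2.2)
    (η : Fin d × Fin d × Fin d → ℝ) (hQη : memQ (Qeta Qh Ψ η))
    (S : Matrix (Fin d) (Fin d) ℝ) (hS : isSigmaOf (Qeta Qh Ψ η) S) :
    memC (gammaOf S) ∧
    (∀ Γ, memC Γ → lagrangian Qh Ψ η (gammaOf S) ≤ lagrangian Qh Ψ η Γ) ∧
    (∀ Γ, memC Γ → lagrangian Qh Ψ η Γ = lagrangian Qh Ψ η (gammaOf S) →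
      Γ = gammaOf S) ∧
    lagrangian Qh Ψ η (gammaOf S) = Real.log (tau (Qeta Qh Ψ η)) + ((d : ℝ) - 1) := by
  obtain ⟨hS, -, hΘS⟩ := hS
  let r : Fin d := ⟨0, hd⟩
  have hA := hQη.posDef_deleteRoot_thetaOf r
  have hAB := deleteRoot_thetaOf_mul_rootedGram_gammaOf hΘS r
  have hB {Γ} (hΓ : memC Γ) := ((memC_iff_posDef_rootedGram r).1 hΓ).2.2
  have hL {Γ} (hΓ : memC Γ) :=
    lagrangian_eq_trace_sub_log_det (η := η) hΨ hQη.1 hΓ.1 hΓ.2.1 r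
  have hmem : memC (gammaOf S) := memC_gammaOf hQη hS hΘS hd
  have hval := (hL hmem).trans ((trace_mul_sub_log_det_eq_iff hA (hB hmem)).2 hAB)
  refine ⟨hmem, fun Γ hΓ => ?_, fun Γ hΓ heq => ?_, ?_⟩
  · rw [hval, hL hΓ]
    exact card_add_log_det_le_trace_mul_sub_log_det hA (hB hΓ)
  · rw [hval, hL hΓ, trace_mul_sub_log_det_eq_iff hA (hB hΓ)] at heq
    exact eq_of_rootedGram_eq hΓ.1 hΓ.2.1 hmem.1 hmem.2.1
      (left_inv_eq_right_inv (mul_eq_one_comm.1 heq) hAB)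
  · have hcard : (Fintype.card {i // i ≠ r} : ℝ) + 1 = d := mod_cast card_fin_ne_add_one r
    rw [hval, det_deleteRoot_thetaOf hQη.1, ← hcard]
    ring

/-- For nonnegative multipliers `η` with `Q(η) ∈ 𝒬`, the Lagrangian `L(·, η)` attains
its infimum over the cone `𝒞^d` uniquely at `Γ(Q(η))`, with value
`log τ(Q(η)) + (d − 1)`. -/
theorem lagrangian_inf {d : ℕ} (hd : 0 < d)
    (Qh : Matrix (Fin d) (Fin d) ℝ)
    (hQhsym : Qh.IsSymm) (hQhdiag : ∀ i, Qh i i = 0)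
    (Ψ : Finset (Fin d × Fin d × Fin d))
    (hΨ : ∀ t ∈ Ψ, t.1 ≠ t.2.1 ∧ t.1 ≠ t.2.2 ∧ t.2.1 ≠ t.2.2)
    (η : Fin d × Fin d × Fin d → ℝ) (hη : ∀ t ∈ Ψ, 0 ≤ η t)
    (hQη : memQ (Qeta Qh Ψ η))
    (S : Matrix (Fin d) (Fin d) ℝ) (hS : isSigmaOf (Qeta Qh Ψ η) S) :
    memC (gammaOf S) ∧
    (∀ Γ, memC Γ → lagrangian Qh Ψ η (gammaOf S) ≤ lagrangian Qh Ψ η Γ) ∧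
    (∀ Γ, memC Γ → lagrangian Qh Ψ η Γ = lagrangian Qh Ψ η (gammaOf S) →
      Γ = gammaOf S) ∧
    lagrangian Qh Ψ η (gammaOf S) = Real.log (tau (Qeta Qh Ψ η)) + ((d : ℝ) - 1) :=
  lagrangian_inf_general hd Qh Ψ hΨ η hQη S hS
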